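/- For every n-qubit mixed state ρ and every γ ∈ ℝ: if 4^n · Σ_{x ∈ 𝔽₂^{2n}} p_ρ(x)³ ≥ γ, then the stabilizer fidelity satisfies F(ρ) ≥ (4γ − 1)/3. -/

import Mathlib

open scoped BigOperators ComplexOrder

/-- The phase space `𝔽₂^{2n}`, written as pairs `(a, b)` with `a, b ∈ 𝔽₂ⁿ`. -/
abbrev PhaseSpace (n : ℕ) := (Fin n → ZMod 2) × (Fin n → ZMod 2)

/-- The symplectic product `[x, y] = a·d + b·c` for `x = (a,b)`, `y = (c,d)`. -/
def sympl {n : ℕ} (x y : PhaseSpace n) : ZMod 2 :=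
  ∑ i, x.1 i * y.2 i + ∑ i, x.2 i * y.1 i

/-- The symplectic Fourier transform `f̂(a) = 4^{-n} ∑_x (-1)^{[a,x]} f(x)`. -/
noncomputable def sft {n : ℕ} (f : PhaseSpace n → ℝ) (a : PhaseSpace n) : ℝ :=
  (1 / 4 ^ n) * ∑ x, (-1 : ℝ) ^ (sympl a x).val * f x

/-- The symplectic complement of a set `S ⊆ 𝔽₂^{2n}`. -/
def symplComplement {n : ℕ} (S : Set (PhaseSpace n)) : Set (PhaseSpace n) :=
  {x | ∀ a ∈ S, sympl x a = 0}

/-- The Weyl operator `W_x = i^{a·b} X^a Z^b` for `x = (a,b)`, as a `2^n × 2^n` matrix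
indexed by `𝔽₂ⁿ`: `(W_x)_{k,j} = i^{a·b} (-1)^{b·j} [k = j + a]`. -/
noncomputable def Weyl {n : ℕ} (x : PhaseSpace n) :
    Matrix (Fin n → ZMod 2) (Fin n → ZMod 2) ℂ :=
  fun k j => Complex.I ^ (∑ i, (x.1 i).val * (x.2 i).val) *
    (if k = j + x.1 then (-1 : ℂ) ^ (∑ i, (x.2 i).val * (j i).val) else 0)

/-- `p_H(x) = 2^{-n} tr(W_x H)²` (the trace is real for Hermitian `H`). -/
noncomputable def pFun {n : ℕ} (H : Matrix (Fin n → ZMod 2) (Fin n → ZMod 2) ℂ)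
    (x : PhaseSpace n) : ℝ :=
  ((Weyl x * H).trace.re) ^ 2 / 2 ^ n

/-- A set is Lagrangian if it equals its symplectic complement. -/
def IsLagrangian {n : ℕ} (S : Set (PhaseSpace n)) : Prop :=
  S = symplComplement S

/-- The outer product `|φ⟩⟨φ|` of a vector `φ ∈ ℂ^{2^n}`. -/
noncomputable def outer {n : ℕ} (φ : (Fin n → ZMod 2) → ℂ) :
    Matrix (Fin n → ZMod 2) (Fin n → ZMod 2) ℂ :=
  Matrix.vecMulVec φ (fun j => starRingEnd ℂ (φ j))

/-- `Weyl(σ) = {x : tr(W_x σ) = ±1}`. -/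
def weylSet {n : ℕ} (σ : Matrix (Fin n → ZMod 2) (Fin n → ZMod 2) ℂ) :
    Set (PhaseSpace n) :=
  {x | (Weyl x * σ).trace = 1 ∨ (Weyl x * σ).trace = -1}

/-- A unit vector `φ` is a stabilizer state iff `Weyl(|φ⟩⟨φ|)` is Lagrangian. -/
def IsStabilizerState {n : ℕ} (φ : (Fin n → ZMod 2) → ℂ) : Prop :=
  (∑ j, Complex.normSq (φ j)) = 1 ∧ IsLagrangian (weylSet (outer φ))

/-- The stabilizer fidelity `F(ρ) = max_{stabilizer |φ⟩} ⟨φ|ρ|φ⟩ = max tr(ρ|φ⟩⟨φ|)`. -/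
noncomputable def stabFidelity {n : ℕ}
    (ρ : Matrix (Fin n → ZMod 2) (Fin n → ZMod 2) ℂ) : ℝ :=
  ⨆ φ : {φ : (Fin n → ZMod 2) → ℂ // IsStabilizerState φ}, ((ρ * outer φ.1).trace).re

/-! helper lemmas -/

noncomputable def sg {n : ℕ} (b j : Fin n → ZMod 2) : ℂ :=
  (-1 : ℂ) ^ (∑ i, (b i).val * (j i).val)

lemma sg_eq {n : ℕ} (b j : Fin n → ZMod 2) :
    sg b j = (-1 : ℂ) ^ (∑ i, b i * j i : ZMod 2).val := by
  unfold sg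
  rw [neg_one_pow_eq_pow_mod_two, ← ZMod.val_natCast]
  congr 2
  push_cast
  simp

lemma neg_one_val_add (u v : ZMod 2) :
    (-1 : ℂ) ^ (u + v).val = (-1) ^ u.val * (-1) ^ v.val := by
  rw [ZMod.val_add, ← neg_one_pow_eq_pow_mod_two, pow_add]

lemma sg_add {n : ℕ} (b j k : Fin n → ZMod 2) : sg b (j + k) = sg b j * sg b k := by
  simp only [sg_eq, ← neg_one_val_add, Pi.add_apply, mul_add, Finset.sum_add_distrib]

lemma sg_comm {n : ℕ} (b j : Fin n → ZMod 2) : sg b j = sg j b := by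
  simp only [sg_eq, mul_comm]

lemma sg_sq {n : ℕ} (b j : Fin n → ZMod 2) : sg b j * sg b j = 1 := by
  unfold sg
  rw [← pow_add, ← two_mul, pow_mul]; simp

lemma sg_conj {n : ℕ} (b j : Fin n → ZMod 2) : star (sg b j) = sg b j := by
  unfold sg; simp

lemma add_self_f {n : ℕ} (a : Fin n → ZMod 2) : a + a = 0 := by
  ext i; exact CharTwo.add_self_eq_zero _

lemma eq_add_iff {n : ℕ} (k j a : Fin n → ZMod 2) : k = j + a ↔ j = k + a := by
  constructor <;> (rintro rfl; rw [add_assoc, add_self_f, add_zero])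

noncomputable def ph {n : ℕ} (x : PhaseSpace n) : ℂ :=
  Complex.I ^ (∑ i, (x.1 i).val * (x.2 i).val)

lemma Weyl_apply {n : ℕ} (x : PhaseSpace n) (k j) :
    Weyl x k j = ph x * (if k = j + x.1 then sg x.2 j else 0) := rfl

lemma ph_sq {n : ℕ} (x : PhaseSpace n) : ph x * ph x = sg x.2 x.1 := by
  rw [sg_comm]
  unfold ph sg
  rw [← mul_pow, Complex.I_mul_I]

lemma ph_conj {n : ℕ} (x : PhaseSpace n) : star (ph x) = ph x * sg x.2 x.1 := by
  rw [sg_comm]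
  unfold ph sg
  rw [← mul_pow, star_pow]; simp

lemma Weyl_herm {n : ℕ} (x : PhaseSpace n) : (Weyl x).IsHermitian := by
  ext k j
  rw [Matrix.conjTranspose_apply, Weyl_apply, Weyl_apply, star_mul', ph_conj]
  by_cases h : k = j + x.1
  · have h2 := (eq_add_iff _ _ _).1 h
    rw [if_pos h, if_pos h2, sg_conj, h, sg_add]
    linear_combination (ph x * sg x.2 j) * sg_sq x.2 x.1
  · have h2 : ¬ j = k + x.1 := fun h' => h ((eq_add_iff _ _ _).1 h')
    rw [if_neg h, if_neg h2]; simp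

lemma Weyl_mul_apply {n : ℕ} (x y : PhaseSpace n) (k j) :
    (Weyl x * Weyl y) k j =
      ph x * ph y * (if k = j + y.1 + x.1 then sg x.2 (j + y.1) * sg y.2 j else 0) := by
  rw [Matrix.mul_apply, Finset.sum_eq_single (j + y.1)]
  · rw [Weyl_apply, Weyl_apply, if_pos (rfl : j + y.1 = j + y.1)]
    split_ifs <;> ring
  · intro b _ hb
    rw [Weyl_apply y, if_neg hb]; simp
  · simp

lemma Weyl_sq {n : ℕ} (x : PhaseSpace n) : Weyl x * Weyl x = 1 := by
  ext k j
  rw [Weyl_mul_apply, add_assoc, add_self_f, add_zero, ph_sq, sg_add, Matrix.one_apply]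
  split_ifs
  · linear_combination (sg x.2 x.1 * sg x.2 x.1) * sg_sq x.2 j + sg_sq x.2 x.1
  · simp

lemma sg_sympl {n : ℕ} (x y : PhaseSpace n) :
    sg x.2 y.1 = (-1 : ℂ) ^ (sympl x y).val * sg y.2 x.1 := by
  have : (-1 : ℂ) ^ (sympl x y).val = sg y.2 x.1 * sg x.2 y.1 := by
    rw [sg_comm y.2]
    unfold sympl
    rw [neg_one_val_add, sg_eq, sg_eq]
  rw [this]
  linear_combination -(sg x.2 y.1) * sg_sq y.2 x.1

lemma Weyl_comm {n : ℕ} (x y : PhaseSpace n) :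
    Weyl x * Weyl y = (-1 : ℂ) ^ (sympl x y).val • (Weyl y * Weyl x) := by
  ext k j
  rw [Matrix.smul_apply, Weyl_mul_apply, Weyl_mul_apply, sg_add, sg_add, sg_sympl, smul_eq_mul,
    add_assoc, add_comm y.1, ← add_assoc]
  split_ifs <;> ring

lemma sum_sg {n : ℕ} (v : Fin n → ZMod 2) : ∑ b, sg b v = if v = 0 then (2 : ℂ) ^ n else 0 := by
  split_ifs with h
  · subst h; simp [sg, ZMod.card]
  · obtain ⟨i, hi⟩ := Function.ne_iff.1 h
    have hi1 : v i = 1 := by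
      have : ∀ u : ZMod 2, u ≠ 0 → u = 1 := by decide
      exact this _ hi
    have hs : sg (Pi.single i 1) v = -1 := by
      rw [sg_eq, Finset.sum_eq_single i]
      · simp [hi1, ZMod.val_one]
      · intro b _ hb; simp [hb]
      · simp
    have := Equiv.sum_comp (Equiv.addRight (Pi.single i (1 : ZMod 2))) (fun b => sg b v)
    simp only [Equiv.coe_addRight] at this
    rw [Finset.sum_congr rfl (g := fun b => - sg b v)] at this
    · rw [Finset.sum_neg_distrib] at this
      linear_combination (-1/2 : ℂ) * this
    · intro b _
      rw [sg_comm, sg_add, sg_comm v, sg_comm v, hs]; ring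

lemma Weyl_complete {n : ℕ} (i j k l : Fin n → ZMod 2) :
    ∑ x : PhaseSpace n, Weyl x i j * Weyl x k l = if i = l ∧ j = k then (2 : ℂ) ^ n else 0 := by
  rw [Fintype.sum_prod_type, Finset.sum_eq_single (i + j)]
  · have e : i = j + (i + j) := by rw [add_comm i j, ← add_assoc, add_self_f, zero_add]
    by_cases hk : k = l + (i + j)
    · have : ∀ b, Weyl (i + j, b) i j * Weyl (i + j, b) k l = sg b (i + l) := by
        intro b
        rw [Weyl_apply, Weyl_apply]
        simp only
        rw [if_pos e, if_pos hk]
        have := ph_sq (i + j, b)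
        simp only [sg_add] at this ⊢
        linear_combination sg b j * sg b l * this + sg b i * sg b l * sg_sq b j
      simp only [this, sum_sg]
      congr 1
      rw [eq_iff_iff]
      constructor
      · intro h
        have h1 : i = l := by
          have := (eq_add_iff 0 i l).1 h.symm
          simpa using this
        refine ⟨h1, ?_⟩
        rw [hk, h1, ← add_assoc, add_self_f, zero_add]
      · rintro ⟨rfl, -⟩; exact add_self_f _
    · rw [if_neg]
      · apply Finset.sum_eq_zero
        intro b _
        rw [Weyl_apply _ k, if_neg hk]; simp
      · rintro ⟨rfl, rfl⟩
        apply hk; rw [← add_assoc, add_self_f, zero_add]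
  · intro a _ ha
    apply Finset.sum_eq_zero
    intro b _
    rw [Weyl_apply, if_neg]
    · simp
    · rintro h
      apply ha
      simp only at h
      rw [h, add_comm j a, add_assoc, add_self_f, add_zero]
  · simp

lemma plancherel {n : ℕ} (A B : Matrix (Fin n → ZMod 2) (Fin n → ZMod 2) ℂ) :
    ∑ x : PhaseSpace n, (Weyl x * A).trace * (Weyl x * B).trace = 2 ^ n * (A * B).trace := by
  have h1 : ∀ x : PhaseSpace n, (Weyl x * A).trace * (Weyl x * B).trace =
      ∑ i, ∑ j, ∑ k, ∑ l, (Weyl x i j * Weyl x k l) * (A j i * B l k) := by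
    intro x
    simp only [Matrix.trace, Matrix.diag_apply, Matrix.mul_apply, Finset.sum_mul_sum]
    refine Finset.sum_congr rfl fun i _ => ?_
    rw [Finset.sum_comm]
    refine Finset.sum_congr rfl fun i _ => Finset.sum_congr rfl fun i _ =>
      Finset.sum_congr rfl fun i _ => by ring
  simp only [h1]
  rw [Finset.sum_comm]
  simp_rw [Finset.sum_comm (s := (Finset.univ : Finset (PhaseSpace n))), ← Finset.sum_mul,
    Weyl_complete]
  simp only [Matrix.trace, Matrix.diag_apply, Matrix.mul_apply, Finset.mul_sum]
  rw [Finset.sum_comm]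
  refine Finset.sum_congr rfl fun i _ => Finset.sum_congr rfl fun j _ => ?_
  rw [Finset.sum_eq_single i, Finset.sum_eq_single j]
  · simp
  · intro b _ hb; rw [if_neg]; · simp
    rintro ⟨rfl, _⟩; exact hb rfl
  · simp
  · intro b _ hb; apply Finset.sum_eq_zero; intro c _; rw [if_neg]; · simp
    rintro ⟨_, rfl⟩; exact hb rfl
  · simp

abbrev Mt (n : ℕ) := Matrix (Fin n → ZMod 2) (Fin n → ZMod 2) ℂ

lemma trace_real {n : ℕ} (A B : Mt n) (hA : A.IsHermitian) (hB : B.IsHermitian) :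
    (A * B).trace = ((A * B).trace.re : ℂ) := by
  have : star (A * B).trace = (A * B).trace := by
    rw [← Matrix.trace_conjTranspose, Matrix.conjTranspose_mul, hA.eq, hB.eq, Matrix.trace_mul_comm]
  exact (Complex.conj_eq_iff_re.1 this).symm

lemma uncert {n : ℕ} (ρ A : Mt n) (hρ : ρ.PosSemidef) (hτ : ρ.trace = 1) (hA : A.IsHermitian)
    (s : ℝ) (hs : A * A = (s : ℂ) • (1 : Mt n)) (ht : (A * ρ).trace = s) : s ≤ 1 := by
  have h := (hρ.mul_mul_conjTranspose_same (A - (s : ℂ) • (1 : Mt n))).trace_nonneg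
  have hB : (A - (s : ℂ) • (1 : Mt n)).conjTranspose = A - (s : ℂ) • (1 : Mt n) := by
    simp [Matrix.conjTranspose_sub, hA.eq]
  rw [hB, Matrix.trace_mul_comm, ← Matrix.mul_assoc] at h
  have e : (A - (s : ℂ) • (1 : Mt n)) * (A - (s : ℂ) • (1 : Mt n)) * ρ =
      ((s : ℂ) + s * s) • ρ - (2 * (s : ℂ)) • (A * ρ) := by
    have : (A - (s : ℂ) • (1 : Mt n)) * (A - (s : ℂ) • (1 : Mt n)) =
      ((s : ℂ) + s * s) • (1 : Mt n) - (2 * (s : ℂ)) • A := by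
      rw [sub_mul, mul_sub, mul_sub, hs]
      simp only [Matrix.smul_mul, Matrix.mul_smul, Matrix.one_mul, Matrix.mul_one]
      module
    rw [this, sub_mul]; simp
  rw [e, Matrix.trace_sub, Matrix.trace_smul, Matrix.trace_smul, hτ, ht] at h
  have h2 : (0 : ℝ) ≤ (s + s * s) - 2 * s * s := by
    have : (0 : ℂ) ≤ (((s + s * s) - 2 * s * s : ℝ) : ℂ) := by
      convert h using 1; push_cast; simp
    exact_mod_cast this
  nlinarith

noncomputable def tt {n : ℕ} (ρ : Mt n) (x : PhaseSpace n) : ℝ := (Weyl x * ρ).trace.re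

lemma tt_eq {n : ℕ} (ρ : Mt n) (hρ : ρ.IsHermitian) (x : PhaseSpace n) :
    (Weyl x * ρ).trace = (tt ρ x : ℂ) := trace_real _ _ (Weyl_herm x) hρ

lemma tt_le {n : ℕ} (ρ : Mt n) (hρ : ρ.PosSemidef) (hτ : ρ.trace = 1) (x : PhaseSpace n) :
    tt ρ x ^ 2 ≤ 1 := by
  apply uncert ρ ((tt ρ x : ℂ) • Weyl x) hρ hτ
  · unfold Matrix.IsHermitian
    rw [Matrix.conjTranspose_smul, (Weyl_herm x).eq]; simp
  · rw [Matrix.smul_mul, Matrix.mul_smul, Weyl_sq, smul_smul]; push_cast; rw [sq]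
  · rw [Matrix.smul_mul, Matrix.trace_smul, tt_eq ρ hρ.1]; push_cast; rw [sq]; rfl

lemma tt_uncert {n : ℕ} (ρ : Mt n) (hρ : ρ.PosSemidef) (hτ : ρ.trace = 1) (x y : PhaseSpace n)
    (h : sympl x y ≠ 0) : tt ρ x ^ 2 + tt ρ y ^ 2 ≤ 1 := by
  have h1 : sympl x y = 1 := by
    have : ∀ u : ZMod 2, u ≠ 0 → u = 1 := by decide
    exact this _ h
  have hc : Weyl x * Weyl y = - (Weyl y * Weyl x) := by
    rw [Weyl_comm, h1]; simp [ZMod.val_one]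
  apply uncert ρ ((tt ρ x : ℂ) • Weyl x + (tt ρ y : ℂ) • Weyl y) hρ hτ
  · unfold Matrix.IsHermitian
    rw [Matrix.conjTranspose_add, Matrix.conjTranspose_smul, Matrix.conjTranspose_smul,
      (Weyl_herm x).eq, (Weyl_herm y).eq]; simp
  · rw [add_mul, mul_add, mul_add]
    simp only [Matrix.smul_mul, Matrix.mul_smul, Weyl_sq, hc]
    push_cast
    module
  · rw [add_mul, Matrix.trace_add, Matrix.smul_mul, Matrix.trace_smul, Matrix.smul_mul,
      Matrix.trace_smul, tt_eq ρ hρ.1, tt_eq ρ hρ.1]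
    push_cast; simp only [smul_eq_mul]; ring

lemma tt_planch {n : ℕ} (ρ σ : Mt n) (hρ : ρ.IsHermitian) (hσ : σ.IsHermitian) :
    ∑ x : PhaseSpace n, tt ρ x * tt σ x = 2 ^ n * (ρ * σ).trace.re := by
  have h := plancherel ρ σ
  simp only [tt_eq ρ hρ, tt_eq σ hσ] at h
  rw [trace_real ρ σ hρ hσ] at h
  exact_mod_cast h

lemma purity {n : ℕ} (ρ : Mt n) (hρ : ρ.PosSemidef) (hτ : ρ.trace = 1) :
    (ρ * ρ).trace.re ≤ 1 := by
  have hd : ∀ i, ρ i i = ((ρ i i).re : ℂ) := fun i =>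
    (Complex.conj_eq_iff_re.1 (hρ.1.apply i i)).symm
  have key : ∀ i j, (ρ i j * ρ j i).re ≤ (ρ i i).re * (ρ j j).re := by
    intro i j
    have h := (hρ.submatrix ![i, j]).det_nonneg
    rw [Matrix.det_fin_two] at h
    simp only [Matrix.submatrix_apply, Matrix.cons_val_zero, Matrix.cons_val_one] at h
    have := (Complex.le_def.1 h).1
    rw [hd i, hd j] at this
    simp only [Complex.sub_re, Complex.zero_re, ← Complex.ofReal_mul, Complex.ofReal_re] at this
    linarith
  have hs : ∑ i, (ρ i i).re = 1 := by
    have := congrArg Complex.re hτ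
    simpa [Matrix.trace] using this
  calc (ρ * ρ).trace.re = ∑ i, ∑ j, (ρ i j * ρ j i).re := by
        simp only [Matrix.trace, Matrix.diag_apply, Matrix.mul_apply, Complex.re_sum]
    _ ≤ ∑ i, ∑ j, (ρ i i).re * (ρ j j).re :=
        Finset.sum_le_sum fun i _ => Finset.sum_le_sum fun j _ => key i j
    _ = 1 := by rw [← Finset.sum_mul_sum, hs]; norm_num

lemma sympl_self {n : ℕ} (x : PhaseSpace n) : sympl x x = 0 := by
  unfold sympl
  simp only [mul_comm]
  exact CharTwo.add_self_eq_zero _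

lemma sympl_comm {n : ℕ} (x y : PhaseSpace n) : sympl x y = sympl y x := by
  unfold sympl
  simp only [mul_comm, add_comm]

def Iso {n : ℕ} (S : Set (PhaseSpace n)) : Prop := ∀ x ∈ S, ∀ y ∈ S, sympl x y = 0

lemma exists_lagr {n : ℕ} (M : Set (PhaseSpace n)) (hM : Iso M) :
    ∃ L, M ⊆ L ∧ IsLagrangian L := by
  obtain ⟨L, hML, hL⟩ := Set.Finite.exists_le_maximal
    (Set.toFinite {S : Set (PhaseSpace n) | Iso S}) hM
  refine ⟨L, hML, ?_⟩
  apply Set.Subset.antisymm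
  · intro x hx y hy
    exact hL.1 x hx y hy
  · intro x hx
    have hI : Iso (insert x L) := by
      rintro u (rfl | hu) v (rfl | hv)
      · exact sympl_self _
      · exact hx v hv
      · rw [sympl_comm]; exact hx u hu
      · exact hL.1 u hu v hv
    exact hL.2 hI (Set.subset_insert _ _) (Set.mem_insert _ _)

lemma outer_psd {n : ℕ} (φ : (Fin n → ZMod 2) → ℂ) : (outer φ).PosSemidef :=
  Matrix.posSemidef_vecMulVec_self_star φ

lemma outer_trace {n : ℕ} (φ : (Fin n → ZMod 2) → ℂ) (h : (∑ j, Complex.normSq (φ j)) = 1) :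
    (outer φ).trace = 1 := by
  have : (outer φ).trace = ((∑ j, Complex.normSq (φ j) : ℝ) : ℂ) := by
    simp [Matrix.trace, outer, Matrix.vecMulVec_apply, Complex.mul_conj]
  rw [this, h]; simp

lemma mem_weylSet {n : ℕ} (σ : Mt n) (hσ : σ.IsHermitian) (x : PhaseSpace n) :
    x ∈ weylSet σ ↔ tt σ x ^ 2 = 1 := by
  unfold weylSet
  rw [Set.mem_ofPred_eq, tt_eq σ hσ]
  constructor
  · rintro (h | h) <;> norm_cast at h <;> rw [h] <;> norm_num
  · intro h
    rcases sq_eq_sq_iff_eq_or_eq_neg.1 (h.trans (one_pow 2).symm) with h | h <;> rw [h] <;> simp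

/-- if all Weyl operators in a Lagrangian have |t| = 1 then state is stabilizer -/
lemma stab_of {n : ℕ} (L : Set (PhaseSpace n)) (hL : IsLagrangian L) (φ : (Fin n → ZMod 2) → ℂ)
    (h : (∑ j, Complex.normSq (φ j)) = 1) (hx : ∀ x ∈ L, tt (outer φ) x ^ 2 = 1) :
    IsStabilizerState φ ∧ ∀ x ∉ L, tt (outer φ) x = 0 := by
  have h0 : ∀ x ∉ L, tt (outer φ) x = 0 := by
    intro x hxL
    rw [hL] at hxL
    simp only [symplComplement, Set.mem_ofPred_eq, not_forall] at hxL
    obtain ⟨y, hy, hxy⟩ := hxL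
    have := tt_uncert (outer φ) (outer_psd φ) (outer_trace φ h) x y hxy
    rw [hx y hy] at this
    nlinarith
  refine ⟨⟨h, ?_⟩, h0⟩
  have : weylSet (outer φ) = L := by
    ext x
    rw [mem_weylSet _ (outer_psd φ).1]
    constructor
    · intro h1
      by_contra hc
      rw [h0 x hc] at h1; norm_num at h1
    · exact hx x
  rw [this]; exact hL

lemma joint_basis {n : ℕ} (L : Set (PhaseSpace n)) (hL : IsLagrangian L) :
    ∃ (ι : Type) (_ : Fintype ι) (φ : ι → (Fin n → ZMod 2) → ℂ),
      (∀ j, ∑ k, Complex.normSq (φ j k) = 1) ∧ (∑ j, outer (φ j) = 1) ∧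
      ∀ j, ∀ x ∈ L, ∃ c : ℂ, Weyl x * outer (φ j) = c • outer (φ j) := by
  classical
  let T : L → EuclideanSpace ℂ (Fin n → ZMod 2) →ₗ[ℂ] EuclideanSpace ℂ (Fin n → ZMod 2) :=
    fun x => Matrix.toEuclideanLin (Weyl x.1)
  have hT : ∀ x, (T x).IsSymmetric := fun x =>
    Matrix.isHermitian_iff_isSymmetric.1 (Weyl_herm x.1)
  have hmul : ∀ x y, T x * T y = Matrix.toEuclideanLin (Weyl x.1 * Weyl y.1) := by
    intro x y
    ext v : 1
    simp [T, Matrix.toEuclideanLin, Matrix.mulVec_mulVec]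
  have hC : Pairwise (Function.onFun Commute T) := by
    intro x y _
    change T x * T y = T y * T x
    have h0 : sympl x.1 y.1 = 0 := by
      have h1 : x.1 ∈ symplComplement L := hL.subset x.2
      exact h1 y.1 y.2
    rw [hmul, hmul, Weyl_comm, h0]; simp
  have hint := LinearMap.IsSymmetric.directSum_isInternal_of_pairwise_commute hT hC
  have hort := LinearMap.IsSymmetric.orthogonalFamily_iInf_eigenspaces hT
  let V := fun α : L → ℂ => ⨅ j, Module.End.eigenspace (T j) (α j)
  let b := hint.collectedBasis (fun α => (stdOrthonormalBasis ℂ (V α)).toBasis)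
  have hb : Orthonormal ℂ b := hint.collectedBasis_orthonormal hort (by simp)
  let ι := Σ α : L → ℂ, Fin (Module.finrank ℂ (V α))
  have : Finite ι := Module.Finite.finite_basis b
  let _ : Fintype ι := Fintype.ofFinite ι
  let B : OrthonormalBasis ι ℂ _ := b.toOrthonormalBasis hb
  refine ⟨ι, inferInstance, fun j k => B j k, ?_, ?_, ?_⟩
  · intro j
    have := B.norm_eq_one j
    rw [EuclideanSpace.norm_eq, Real.sqrt_eq_one] at this
    simpa [Complex.normSq_eq_norm_sq] using this
  · ext k l
    have := B.sum_inner_mul_inner (EuclideanSpace.single k 1) (EuclideanSpace.single l 1)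
    rw [Matrix.sum_apply]
    simpa [outer, Matrix.vecMulVec_apply, Matrix.one_apply, eq_comm (a := k), EuclideanSpace.inner_single_left,
      EuclideanSpace.inner_single_right, PiLp.single_apply] using this
  · intro j x hx
    have hm : B j ∈ V j.1 := by
      simp [B, b]
      exact DirectSum.IsInternal.collectedBasis_mem hint (fun α => (stdOrthonormalBasis ℂ ↥(V α)).toBasis) j
    have hm2 : T ⟨x, hx⟩ (B j) = j.1 ⟨x, hx⟩ • B j :=
      Module.End.mem_eigenspace_iff.1 ((Submodule.mem_iInf _).1 hm ⟨x, hx⟩)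
    refine ⟨j.1 ⟨x, hx⟩, ?_⟩
    unfold outer
    rw [Matrix.mul_vecMulVec, ← Matrix.smul_vecMulVec]
    congr 1
    ext k
    have := congrArg (fun v => v k) hm2
    simpa [T, Matrix.toEuclideanLin] using this

lemma lagr_fid {n : ℕ} (ρ : Mt n) (hρ : ρ.PosSemidef) (hτ : ρ.trace = 1)
    (L : Set (PhaseSpace n)) (hL : IsLagrangian L) [DecidablePred (· ∈ L)] (F : ℝ)
    (hF : ∀ φ, IsStabilizerState φ → (ρ * outer φ).trace.re ≤ F) :
    ∑ x with x ∈ L, tt ρ x ^ 2 ≤ 2 ^ n * F := by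
  obtain ⟨ι, _, φ, h1, hsum, heig⟩ := joint_basis L hL
  have hO : ∀ j, (outer (φ j)).IsHermitian := fun j => (outer_psd _).1
  have heig' : ∀ j, ∀ x ∈ L, Weyl x * outer (φ j) = (tt (outer (φ j)) x : ℂ) • outer (φ j) := by
    intro j x hx
    obtain ⟨c, hc⟩ := heig j x hx
    have := congrArg Matrix.trace hc
    rw [tt_eq _ (hO j), Matrix.trace_smul, outer_trace _ (h1 j), smul_eq_mul, mul_one] at this
    rw [hc, this]
  have hone : ∀ j, ∀ x ∈ L, tt (outer (φ j)) x ^ 2 = 1 := by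
    intro j x hx
    have h := congrArg (fun A => (Weyl x * A).trace) (heig' j x hx)
    rw [← Matrix.mul_assoc, Weyl_sq, Matrix.one_mul, outer_trace _ (h1 j), Matrix.mul_smul,
      Matrix.trace_smul, tt_eq _ (hO j), smul_eq_mul] at h
    rw [sq]
    exact_mod_cast h.symm
  have hst := fun j => stab_of L hL (φ j) (h1 j) (hone j)
  let f : ι → ℝ := fun j => (ρ * outer (φ j)).trace.re
  have hf0 : ∀ j, 0 ≤ f j := by
    intro j
    have h := (hρ.mul_mul_conjTranspose_same (outer (φ j))).trace_nonneg
    have hsq : outer (φ j) * outer (φ j) = outer (φ j) := by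
      have ht := outer_trace _ (h1 j)
      unfold outer at ht ⊢
      rw [Matrix.trace_vecMulVec] at ht
      rw [Matrix.vecMulVec_mul_vecMulVec, dotProduct_comm, ht, one_smul]
    rw [(hO j).eq, Matrix.trace_mul_comm, ← Matrix.mul_assoc, hsq, Matrix.trace_mul_comm] at h
    exact (Complex.le_def.1 h).1
  have hfs : ∑ j, f j = 1 := by
    have : (ρ * ∑ j, outer (φ j)).trace = 1 := by rw [hsum, Matrix.mul_one, hτ]
    have := congrArg Complex.re this
    rw [Matrix.mul_sum, Matrix.trace_sum, Complex.re_sum] at this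
    simpa using this
  have hfj : ∀ j, ∑ x with x ∈ L, tt ρ x * tt (outer (φ j)) x = 2 ^ n * f j := by
    intro j
    rw [← tt_planch ρ _ hρ.1 (hO j), Finset.sum_filter]
    refine Finset.sum_congr rfl fun x _ => ?_
    split_ifs with hx
    · rfl
    · rw [(hst j).2 x hx, mul_zero]
  have ht : ∀ x ∈ L, tt ρ x = ∑ j, tt (outer (φ j)) x * f j := by
    intro x hx
    have : Weyl x * ρ = ∑ j, (tt (outer (φ j)) x : ℂ) • (outer (φ j) * ρ) := by
      calc Weyl x * ρ = (Weyl x * ∑ j, outer (φ j)) * ρ := by rw [hsum, Matrix.mul_one]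
        _ = _ := by
          rw [Matrix.mul_sum, Matrix.sum_mul]
          refine Finset.sum_congr rfl fun j _ => ?_
          rw [heig' j x hx, Matrix.smul_mul]
    unfold tt at this ⊢
    rw [this, Matrix.trace_sum, Complex.re_sum]
    refine Finset.sum_congr rfl fun j _ => ?_
    rw [Matrix.trace_smul, smul_eq_mul, Complex.re_ofReal_mul, Matrix.trace_mul_comm (outer (φ j)) ρ]
  calc ∑ x with x ∈ L, tt ρ x ^ 2
      = ∑ x with x ∈ L, ∑ j, f j * (tt ρ x * tt (outer (φ j)) x) := by
        refine Finset.sum_congr rfl fun x hx => ?_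
        rw [sq]
        nth_rw 2 [ht x (by simpa using hx)]
        rw [Finset.mul_sum]
        refine Finset.sum_congr rfl fun j _ => by ring
    _ = ∑ j, f j * (2 ^ n * f j) := by
        rw [Finset.sum_comm]
        refine Finset.sum_congr rfl fun j _ => ?_
        rw [← Finset.mul_sum, hfj]
    _ ≤ ∑ j, f j * (2 ^ n * F) := by
        refine Finset.sum_le_sum fun j _ => ?_
        have := hF (φ j) (hst j).1
        have := hf0 j
        gcongr
    _ = 2 ^ n * F := by rw [← Finset.sum_mul, hfs, one_mul]

theorem soundness_close_regime {n : ℕ}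
    (ρ : Matrix (Fin n → ZMod 2) (Fin n → ZMod 2) ℂ)
    (hρ : ρ.PosSemidef) (hτ : ρ.trace = 1)
    (γ : ℝ) (hγle : γ ≤ 4 ^ n * ∑ x, (pFun ρ x) ^ 3) :
    stabFidelity ρ ≥ (4 * γ - 1) / 3 := by
  classical
  have hbdd : BddAbove (Set.range fun φ : {φ : (Fin n → ZMod 2) → ℂ // IsStabilizerState φ} =>
      ((ρ * outer φ.1).trace).re) := by
    refine ⟨(∑ x : PhaseSpace n, (1 : ℝ)) / 2 ^ n, ?_⟩
    rintro _ ⟨φ, rfl⟩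
    rw [le_div_iff₀ (by positivity), mul_comm]
    simp only
    rw [← tt_planch ρ _ hρ.1 (outer_psd _).1]
    refine Finset.sum_le_sum fun x _ => ?_
    have a := tt_le ρ hρ hτ x
    have b := tt_le _ (outer_psd φ.1) (outer_trace _ φ.2.1) x
    nlinarith [sq_nonneg (tt ρ x - tt (outer φ.1) x)]
  have hF : ∀ φ, IsStabilizerState φ → (ρ * outer φ).trace.re ≤ stabFidelity ρ :=
    fun φ h => le_ciSup hbdd ⟨φ, h⟩
  have hM : Iso {x : PhaseSpace n | 1 / 2 < tt ρ x ^ 2} := by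
    intro x hx y hy
    by_contra h
    have := tt_uncert ρ hρ hτ x y h
    simp only [Set.mem_ofPred_eq] at hx hy
    linarith
  obtain ⟨L, hML, hL⟩ := exists_lagr _ hM
  have h1 := lagr_fid ρ hρ hτ L hL _ hF
  have h2 : ∑ x, tt ρ x ^ 2 ≤ 2 ^ n := by
    have := tt_planch ρ ρ hρ.1 hρ.1
    simp only [← sq] at this
    rw [this, sq]
    have := purity ρ hρ hτ
    have h2 : (0 : ℝ) < 2 ^ n := by positivity
    nlinarith
  have h3 : (4 : ℝ) ^ n * ∑ x, (pFun ρ x) ^ 3 = (∑ x, tt ρ x ^ 6) / 2 ^ n := by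
    rw [Finset.mul_sum, Finset.sum_div]
    refine Finset.sum_congr rfl fun x _ => ?_
    change (4 : ℝ) ^ n * (tt ρ x ^ 2 / 2 ^ n) ^ 3 = _
    have : (4 : ℝ) ^ n = 2 ^ n * 2 ^ n := by rw [← mul_pow]; norm_num
    rw [this]
    field_simp
  have h4 : ∑ x, tt ρ x ^ 6 ≤
      (1 / 4) * ∑ x, tt ρ x ^ 2 + (3 / 4) * ∑ x with x ∈ L, tt ρ x ^ 2 := by
    rw [Finset.sum_filter, Finset.mul_sum, Finset.mul_sum, ← Finset.sum_add_distrib]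
    refine Finset.sum_le_sum fun x _ => ?_
    have a := tt_le ρ hρ hτ x
    have h0 := sq_nonneg (tt ρ x)
    have e : tt ρ x ^ 6 = (tt ρ x ^ 2) ^ 3 := by ring
    rw [e]
    have hu' : x ∉ L → tt ρ x ^ 2 ≤ 1 / 2 := by
      intro hx
      by_contra hc
      exact hx (hML (by simpa using hc))
    generalize tt ρ x ^ 2 = u at *
    split_ifs with hx
    · have : u ^ 3 ≤ u := by nlinarith [mul_nonneg h0 (sub_nonneg.2 a), mul_nonneg (mul_nonneg h0 h0) (sub_nonneg.2 a)]
      linarith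
    · have hu := hu' hx
      nlinarith [mul_nonneg h0 (sub_nonneg.2 hu), mul_nonneg (mul_nonneg h0 h0) (sub_nonneg.2 hu)]
  rw [h3, le_div_iff₀ (by positivity)] at hγle
  have h5 : γ * 2 ^ n ≤ (1 / 4 + 3 / 4 * stabFidelity ρ) * 2 ^ n := by
    nlinarith
  have h6 := le_of_mul_le_mul_right h5 (by positivity)
  linarith
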